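/- Let P = {(u_1, u_2) ∈ ℝ² : u_1 ≥ 0, u_1 + u_2 − 1/4 ≥ 0, u_2 ≥ 0, 1 − u_1 − u_2 ≥ 0, 1/2 − u_2 ≥ 0} (the moment polytope of a two-point blowup of ℂP²), with normal vectors v_1 = (1,0), v_2 = (1,1), v_3 = (0,1), v_4 = (−1,−1), v_5 = (0,−1) and l_1(u) = u_1, l_2(u) = u_1 + u_2 − 1/4, l_3(u) = u_2, l_4(u) = 1 − u_1 − u_2, l_5(u) = 1/2 − u_2. Then Trop(P, (1,0)) ∩ Trop(P, (0,1)) ∩ Trop(P, (1,−1)) ∩ Int(P) = {(t, 1/4) : 1/4 ≤ t ≤ 3/8}. -/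

import Mathlib

open scoped Classical

noncomputable section

/-- Integer inner product `⟨w, v⟩ = ∑ i, w i * v i` on `ℤ^n`. -/
def zdot {n : ℕ} (w v : Fin n → ℤ) : ℤ := ∑ i, w i * v i

/-- A lattice vector is primitive if the gcd of its entries is `1`. -/
def Primitive {n : ℕ} (w : Fin n → ℤ) : Prop := Finset.univ.gcd w = 1

/-- The affine function `l_j(u) = ⟨u, v_j⟩ - λ_j`. -/
def lf {n m : ℕ} (v : Fin m → Fin n → ℤ) (lam : Fin m → ℝ) (j : Fin m) (u : Fin n → ℝ) : ℝ :=
  (∑ i, u i * (v j i : ℝ)) - lam j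

/-- The polytope `P = {u : l_j(u) ≥ 0 for all j}`. -/
def Pset {n m : ℕ} (v : Fin m → Fin n → ℤ) (lam : Fin m → ℝ) : Set (Fin n → ℝ) :=
  {u | ∀ j, 0 ≤ lf v lam j u}

/-- The tropicalization of `P` relative to the lattice vector `w`: the set of points at which
the minimum of `{l_j(u) : ⟨w, v_j⟩ ≠ 0}` is attained by at least two distinct indices. -/
def TropRel {n m : ℕ} (v : Fin m → Fin n → ℤ) (lam : Fin m → ℝ) (w : Fin n → ℤ) :
    Set (Fin n → ℝ) :=
  {u | ∃ j₁ j₂ : Fin m, j₁ ≠ j₂ ∧ zdot w (v j₁) ≠ 0 ∧ zdot w (v j₂) ≠ 0 ∧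
        lf v lam j₁ u = lf v lam j₂ u ∧
        ∀ j : Fin m, zdot w (v j) ≠ 0 → lf v lam j₁ u ≤ lf v lam j u}

/-- Normal vectors of the moment polytope of a two-point blowup of `ℂP²`:
`v₁ = (1,0), v₂ = (1,1), v₃ = (0,1), v₄ = (-1,-1), v₅ = (0,-1)`. -/
def vB : Fin 5 → Fin 2 → ℤ := ![![1, 0], ![1, 1], ![0, 1], ![-1, -1], ![0, -1]]

/-- Constants so that `l₁ = u₁, l₂ = u₁ + u₂ - 1/4, l₃ = u₂, l₄ = 1 - u₁ - u₂,
l₅ = 1/2 - u₂`. -/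
def lamB : Fin 5 → ℝ := ![0, 1/4, 0, -1, -1/2]

theorem lfB (u : Fin 2 → ℝ) : lf vB lamB 0 u = u 0 ∧ lf vB lamB 1 u = u 0 + u 1 - 1/4 ∧
    lf vB lamB 2 u = u 1 ∧ lf vB lamB 3 u = 1 - u 0 - u 1 ∧ lf vB lamB 4 u = 1/2 - u 1 := by
  refine ⟨?_, ?_, ?_, ?_, ?_⟩ <;> simp [lf, vB, lamB, Fin.sum_univ_two] <;> ring

theorem intB (u : Fin 2 → ℝ) (h0 : 0 < u 0) (h1 : 0 < u 0 + u 1 - 1/4) (h2 : 0 < u 1)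
    (h3 : 0 < 1 - u 0 - u 1) (h4 : 0 < 1/2 - u 1) : u ∈ interior (Pset vB lamB) := by
  rw [mem_interior]
  refine ⟨{u | 0 < u 0} ∩ {u | 0 < u 0 + u 1 - 1/4} ∩ {u | 0 < u 1} ∩
    {u | 0 < 1 - u 0 - u 1} ∩ {u | 0 < 1/2 - u 1}, ?_, ?_, ⟨⟨⟨⟨h0, h1⟩, h2⟩, h3⟩, h4⟩⟩
  · rintro z ⟨⟨⟨⟨h0, h1⟩, h2⟩, h3⟩, h4⟩ j
    obtain ⟨e0, e1, e2, e3, e4⟩ := lfB z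
    simp only [Set.mem_setOf_eq] at h0 h1 h2 h3 h4
    fin_cases j
    · exact e0 ▸ h0.le
    · exact e1 ▸ h1.le
    · exact e2 ▸ h2.le
    · exact e3 ▸ h3.le
    · exact e4 ▸ h4.le
  · refine ((((isOpen_lt ?_ ?_).inter (isOpen_lt ?_ ?_)).inter (isOpen_lt ?_ ?_)).inter
      (isOpen_lt ?_ ?_)).inter (isOpen_lt ?_ ?_) <;> fun_prop

theorem tropA (u : Fin 2 → ℝ) (h : u ∈ TropRel vB lamB ![1, 0]) :
    (u 1 = 1/4 ∧ u 0 ≤ 3/8) ∨ (u 1 = 1 - 2 * u 0 ∧ 1/4 ≤ u 1) ∨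
      (u 0 + u 1 = 5/8 ∧ u 1 ≤ 1/4) := by
  obtain ⟨e0, e1, e2, e3, e4⟩ := lfB u
  obtain ⟨i, j, hij, hi, hj, he, hm⟩ := h
  have m0 := hm 0 (by decide)
  have m1 := hm 1 (by decide)
  have m3 := hm 3 (by decide)
  fin_cases i <;> fin_cases j <;> first
    | exact absurd rfl hij
    | exact absurd (by decide) hi
    | exact absurd (by decide) hj
    | (simp only [Fin.mk_one, Fin.zero_eta, Fin.reduceFinMk, e0, e1, e2, e3, e4] at he m0 m1 m3
       grind)

theorem tropC (u : Fin 2 → ℝ) (h : u ∈ TropRel vB lamB ![1, -1]) :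
    (u 1 = 1/4 ∧ 1/4 ≤ u 0) ∨ (u 0 = u 1 ∧ u 1 ≤ 1/4) ∨
      (u 0 + u 1 = 1/2 ∧ 1/4 ≤ u 1) := by
  obtain ⟨e0, e1, e2, e3, e4⟩ := lfB u
  obtain ⟨i, j, hij, hi, hj, he, hm⟩ := h
  have m0 := hm 0 (by decide)
  have m2 := hm 2 (by decide)
  have m4 := hm 4 (by decide)
  fin_cases i <;> fin_cases j <;> first
    | exact absurd rfl hij
    | exact absurd (by decide) hi
    | exact absurd (by decide) hj
    | (simp only [Fin.mk_one, Fin.zero_eta, Fin.reduceFinMk, e0, e1, e2, e3, e4] at he m0 m2 m4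
       grind)

/-- For the moment polytope
`P = {u : u₁ ≥ 0, u₁ + u₂ - 1/4 ≥ 0, u₂ ≥ 0, 1 - u₁ - u₂ ≥ 0, 1/2 - u₂ ≥ 0}` of a two-point
blowup of `ℂP²`,
`Trop(P,(1,0)) ∩ Trop(P,(0,1)) ∩ Trop(P,(1,-1)) ∩ Int(P) = {(t, 1/4) : 1/4 ≤ t ≤ 3/8}`. -/
theorem statement13 :
    TropRel vB lamB ![1, 0] ∩ TropRel vB lamB ![0, 1] ∩ TropRel vB lamB ![1, -1] ∩
      interior (Pset vB lamB)
    = {u : Fin 2 → ℝ | ∃ t : ℝ, 1/4 ≤ t ∧ t ≤ 3/8 ∧ u = ![t, 1/4]} := by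
  ext u
  constructor
  · rintro ⟨⟨⟨hA, -⟩, hC⟩, -⟩
    have key : u 1 = 1/4 ∧ 1/4 ≤ u 0 ∧ u 0 ≤ 3/8 := by
      rcases tropA u hA with h | h | h <;> rcases tropC u hC with k | k | k <;>
        refine ⟨?_, ?_, ?_⟩ <;> linarith [h.1, h.2, k.1, k.2]
    refine ⟨u 0, key.2.1, key.2.2, ?_⟩
    ext i
    fin_cases i
    · rfl
    · exact key.1
  · rintro ⟨t, h1, h2, rfl⟩
    obtain ⟨e0, e1, e2, e3, e4⟩ := lfB ![t, 1/4]
    simp only [Matrix.cons_val_zero, Matrix.cons_val_one] at e0 e1 e2 e3 e4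
    refine ⟨⟨⟨⟨0, 1, by decide, by decide, by decide, by rw [e0, e1]; ring, ?_⟩,
      ⟨2, 4, by decide, by decide, by decide, by rw [e2, e4]; norm_num, ?_⟩⟩,
      ⟨2, 4, by decide, by decide, by decide, by rw [e2, e4]; norm_num, ?_⟩⟩, ?_⟩
    · intro j hj
      fin_cases j <;> first
        | exact absurd (by decide) hj
        | (simp only [Fin.mk_one, Fin.zero_eta, Fin.reduceFinMk, e0, e1, e2, e3, e4]; linarith)
    · intro j hj
      fin_cases j <;> first
        | exact absurd (by decide) hj
        | (simp only [Fin.mk_one, Fin.zero_eta, Fin.reduceFinMk, e0, e1, e2, e3, e4]; linarith)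
    · intro j hj
      fin_cases j <;> first
        | exact absurd (by decide) hj
        | (simp only [Fin.mk_one, Fin.zero_eta, Fin.reduceFinMk, e0, e1, e2, e3, e4]; linarith)
    · apply intB <;> simp only [Matrix.cons_val_zero, Matrix.cons_val_one] <;> linarith
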